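/- (Quantitative non-convergence for polygonal neighborhoods, first-order kernel case.) Let N ≥ 3 be an integer and L₁ > 0. Let γ : (0,1] → [0,∞) be measurable with ∫₀¹ ρ³ γ(ρ) dρ < ∞ and π t³ γ(t) ≥ L₁ for almost every t ∈ [cos(π/N), 1]. Let S ⊂ ℝ² be a finite set with at most N elements, all lying on the unit circle {ξ : |ξ| = 1}, and let P be the convex hull of S. Then for each coordinate index i ∈ {1,2}, ∫_{B̄₁(0) \ P} ξ_i² γ(|ξ|) dξ ≥ (2 L₁ / π) · σ_{L,1}(π/N), where B̄₁(0) is the closed unit disk and σ_{L,1}(s) = s/2 + sin(2s)/4 − cos(s) · log(tan(s/2 + π/4)). -/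

import Mathlib

open MeasureTheory Metric Set Real

noncomputable section

/-- `σ_{L,1}(s) = s/2 + sin(2s)/4 − cos(s)·log(tan(s/2 + π/4))`. -/
def sigmaL1 (s : ℝ) : ℝ :=
  s / 2 + Real.sin (2 * s) / 4 - Real.cos s * Real.log (Real.tan (s / 2 + π / 4))

/-
The points of `S` have at most `N` directions, and arcs of half-width less than `π / N` around them
cannot cover the circle, so some unit vector makes an angle at least `π / N` with every point of
`S`. Since `S` lies in the unit ball, `P` then lies in the half-plane bounded by the chord at
distance `cos (π / N)` from the origin, and the circular segment beyond that chord is missed by `P`.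
Integrating the kernel bound `γ(ρ) ≥ L₁ / (π ρ³)` over this segment in polar coordinates around its
axis leaves `L₁ / π` times `∫ (1 - cos s / cos θ) (a cos θ + b sin θ)² dθ` over `|θ| < s = π / N`,
where `a, b` are the components of the test vector along and across the axis. This equals
`a² (s - sin s cos s) + b² (2 σ(s))`, whose second coefficient is the smaller one: the worst test
vector is parallel to the chord.
-/

section Direction

lemma exists_forall_div_two_mul_card_le_dist {p : ℝ} [Fact (0 < p)] (F : Finset (AddCircle p)) :
    ∃ b, ∀ t ∈ F, p / (2 * F.card) ≤ dist b t := by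
  rcases F.eq_empty_or_nonempty with rfl | hF
  · simp
  obtain ⟨b, -, hb⟩ := isCompact_univ.exists_isMaxOn univ_nonempty
    (continuous_infDist_pt (F : Set (AddCircle p))).continuousOn
  refine ⟨b, fun t ht => le_trans ?_ (infDist_le_dist_of_mem (Finset.mem_coe.2 ht))⟩
  by_contra! hlt
  obtain ⟨r, hbr, hr⟩ := exists_between hlt
  have hr0 : 0 ≤ r := infDist_nonneg.trans hbr.le
  have hcover : univ ⊆ ⋃ t ∈ F, closedBall t r := fun x _ => by
    obtain ⟨t, ht, hxt⟩ := (infDist_lt_iff hF).1 ((hb (mem_univ x)).trans_lt hbr)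
    exact mem_iUnion₂.2 ⟨t, ht, hxt.le⟩
  have hvol : ENNReal.ofReal p ≤ ENNReal.ofReal (F.card * (2 * r)) := calc
    ENNReal.ofReal p = volume (univ : Set (AddCircle p)) := (AddCircle.measure_univ p).symm
    _ ≤ ∑ t ∈ F, volume (closedBall t r) :=
      (measure_mono hcover).trans (measure_biUnion_finset_le _ _)
    _ ≤ ∑ _t ∈ F, ENNReal.ofReal (2 * r) := Finset.sum_le_sum fun t _ => by
      rw [AddCircle.volume_closedBall]
      exact ENNReal.ofReal_le_ofReal (min_le_right _ _)
    _ = ENNReal.ofReal (F.card * (2 * r)) := by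
      rw [Finset.sum_const, nsmul_eq_mul, ENNReal.ofReal_mul (Nat.cast_nonneg _),
        ENNReal.ofReal_natCast]
  have hle := (ENNReal.ofReal_le_ofReal_iff (by positivity)).1 hvol
  have hcard : (0 : ℝ) < 2 * F.card := by have := hF.card_pos; positivity
  linarith [(lt_div_iff₀ hcard).1 hr]

lemma cos_le_cos_of_le_norm_coe_addCircle {δ x : ℝ} (hδ : 0 ≤ δ)
    (h : δ ≤ ‖(x : AddCircle (2 * π))‖) : cos x ≤ cos δ := by
  have hle : ‖(x : AddCircle (2 * π))‖ ≤ |2 * π| / 2 :=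
    AddCircle.norm_le_half_period _ two_pi_pos.ne'
  rw [abs_of_pos two_pi_pos, mul_div_cancel_left₀ π two_ne_zero] at hle
  calc cos x = cos ‖(x : AddCircle (2 * π))‖ := by
        rw [AddCircle.norm_eq, cos_abs, cos_sub_int_mul_two_pi]
    _ ≤ cos δ := cos_le_cos_of_nonneg_of_le_pi hδ hle h

lemma re_circleExp_neg_mul (β : ℝ) (z : ℂ) :
    ((Circle.exp (-β) : ℂ) * z).re = ‖z‖ * cos (z.arg - β) := by
  conv_lhs => rw [← Complex.norm_mul_exp_arg_mul_I z]
  rw [Circle.coe_exp, mul_left_comm, ← Complex.exp_add, Complex.re_ofReal_mul,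
    show ((-β : ℝ) : ℂ) * Complex.I + z.arg * Complex.I = ((z.arg - β : ℝ) : ℂ) * Complex.I by
      push_cast; ring, Complex.exp_ofReal_mul_I_re]

lemma exists_circle_forall_re_mul_le {N : ℕ} {S : Set ℂ} (hS : S.Finite) (hN : S.ncard ≤ N) :
    ∃ u : Circle, ∀ z ∈ S, (u * z).re ≤ ‖z‖ * cos (π / N) := by
  have : Fact (0 < 2 * π) := ⟨two_pi_pos⟩
  set F : Finset (AddCircle (2 * π)) := (hS.image fun z => (z.arg : AddCircle (2 * π))).toFinset
    with hFdef
  obtain ⟨b, hb⟩ := exists_forall_div_two_mul_card_le_dist F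
  obtain ⟨β, rfl⟩ := QuotientAddGroup.mk_surjective b
  refine ⟨Circle.exp (-β), fun z hz => ?_⟩
  have hzF : (z.arg : AddCircle (2 * π)) ∈ F := by
    rw [hFdef, Set.Finite.mem_toFinset]
    exact mem_image_of_mem _ hz
  have hcard : F.card ≤ N := by
    rw [hFdef, ← ncard_eq_toFinset_card _ (hS.image _)]
    exact (ncard_image_le hS).trans hN
  have hdist : π / N ≤ ‖((z.arg - β : ℝ) : AddCircle (2 * π))‖ := calc
    π / N ≤ π / F.card := by
      have := Finset.card_pos.2 ⟨_, hzF⟩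
      gcongr
    _ = 2 * π / (2 * F.card) := (mul_div_mul_left _ _ two_ne_zero).symm
    _ ≤ dist (β : AddCircle (2 * π)) z.arg := hb _ hzF
    _ = ‖((z.arg - β : ℝ) : AddCircle (2 * π))‖ := by
      rw [dist_comm, dist_eq_norm, AddCircle.coe_sub]
  rw [re_circleExp_neg_mul]
  gcongr
  exact cos_le_cos_of_le_norm_coe_addCircle (by positivity) hdist

lemma exists_isometry_forall_re_symm_le {E : Type*} [NormedAddCommGroup E] [InnerProductSpace ℝ E]
    (hE : Module.finrank ℝ E = 2) {N : ℕ} {S : Set E} (hS : S.Finite) (hN : S.ncard ≤ N) :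
    ∃ e : ℂ ≃ₗᵢ[ℝ] E, ∀ ξ ∈ S, (e.symm ξ).re ≤ ‖ξ‖ * cos (π / N) := by
  have : FiniteDimensional ℝ E := Module.finite_of_finrank_eq_succ hE
  let e₀ : ℂ ≃ₗᵢ[ℝ] E :=
    Complex.isometryOfOrthonormal ((stdOrthonormalBasis ℝ E).reindex (finCongr hE))
  obtain ⟨u, hu⟩ := exists_circle_forall_re_mul_le (hS.image e₀.symm)
    ((ncard_image_le hS).trans hN)
  refine ⟨(rotation u).symm.trans e₀, fun ξ hξ => ?_⟩
  have hξu := hu _ (mem_image_of_mem _ hξ)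
  rwa [e₀.symm.norm_map, ← rotation_apply] at hξu

end Direction

section Gudermannian

/-- The inverse Gudermannian function, i.e. the primitive of `1 / cos` on `(-π/2, π/2)` vanishing
at `0`; it carries the logarithm in `sigmaL1`. -/
def invGudermannian (x : ℝ) : ℝ := log (tan (x / 2 + π / 4))

lemma hasDerivAt_invGudermannian {x : ℝ} (hx : x ∈ Ioo (-(π / 2)) (π / 2)) :
    HasDerivAt invGudermannian (1 / cos x) x := by
  obtain ⟨hx₁, hx₂⟩ := hx
  have hcos : 0 < cos (x / 2 + π / 4) := cos_pos_of_mem_Ioo ⟨by linarith, by linarith⟩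
  have hsin : 0 < sin (x / 2 + π / 4) := sin_pos_of_pos_of_lt_pi (by linarith) (by linarith)
  have htan : tan (x / 2 + π / 4) ≠ 0 := by rw [tan_eq_sin_div_cos]; positivity
  have hhalf : HasDerivAt (fun x : ℝ => x / 2 + π / 4) (1 / 2) x :=
    ((hasDerivAt_id x).div_const 2).add_const _
  have hdouble : cos x = 2 * sin (x / 2 + π / 4) * cos (x / 2 + π / 4) := by
    rw [← sin_two_mul, ← sin_add_pi_div_two]; ring_nf
  refine (((hasDerivAt_tan hcos.ne').comp x hhalf).log (by exact htan)).congr_deriv ?_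
  rw [Function.comp_apply, hdouble, tan_eq_sin_div_cos]
  field_simp

lemma invGudermannian_zero : invGudermannian 0 = 0 := by simp [invGudermannian]

lemma invGudermannian_neg (x : ℝ) : invGudermannian (-x) = -invGudermannian x := by
  rw [invGudermannian, invGudermannian, ← log_inv, ← tan_pi_div_two_sub]; ring_nf

lemma sin_le_invGudermannian {s : ℝ} (hs₀ : 0 ≤ s) (hs : s < π / 2) :
    sin s ≤ invGudermannian s := by
  have hsub : Icc 0 s ⊆ Ioo (-(π / 2)) (π / 2) := fun x hx =>
    ⟨by linarith [hx.1, pi_pos], hx.2.trans_lt hs⟩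
  have hderiv : ∀ x ∈ Icc 0 s,
      HasDerivAt (fun x => invGudermannian x - sin x) (1 / cos x - cos x) x :=
    fun x hx => (hasDerivAt_invGudermannian (hsub hx)).sub (hasDerivAt_sin x)
  have hmono : MonotoneOn (fun x => invGudermannian x - sin x) (Icc 0 s) := by
    refine monotoneOn_of_hasDerivWithinAt_nonneg (convex_Icc _ _)
      (fun x hx => (hderiv x hx).continuousAt.continuousWithinAt)
      (fun x hx => (hderiv x (interior_subset hx)).hasDerivWithinAt) fun x hx => ?_
    have hcos : 0 < cos x := cos_pos_of_mem_Ioo (hsub (interior_subset hx))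
    rw [sub_nonneg]
    exact (cos_le_one x).trans ((one_le_div hcos).2 (cos_le_one x))
  simpa [invGudermannian_zero] using hmono (left_mem_Icc.2 hs₀) (right_mem_Icc.2 hs₀) hs₀

lemma two_mul_sigmaL1 (s : ℝ) :
    2 * sigmaL1 s = s + sin s * cos s - 2 * cos s * invGudermannian s := by
  rw [sigmaL1, sin_two_mul, invGudermannian]; ring

lemma two_mul_sigmaL1_le {s : ℝ} (hs₀ : 0 ≤ s) (hs : s < π / 2) :
    2 * sigmaL1 s ≤ s - sin s * cos s := by
  have hcos : 0 < cos s := cos_pos_of_mem_Ioo ⟨by linarith [pi_pos], hs⟩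
  rw [two_mul_sigmaL1]
  linarith [mul_le_mul_of_nonneg_left (sin_le_invGudermannian hs₀ hs) hcos.le]

lemma integral_one_sub_cos_div_cos_mul_sq {s : ℝ} (hs : |s| < π / 2) (a b : ℝ) :
    ∫ θ in (-s)..s, (1 - cos s / cos θ) * (a * cos θ + b * sin θ) ^ 2 =
      a ^ 2 * (s - sin s * cos s) + b ^ 2 * (2 * sigmaL1 s) := by
  have hsub : uIcc (-s) s ⊆ Ioo (-(π / 2)) (π / 2) := by
    rw [abs_lt] at hs
    exact ordConnected_Ioo.uIcc_subset ⟨by linarith, by linarith⟩ hs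
  have hcos : ∀ θ ∈ uIcc (-s) s, cos θ ≠ 0 := fun θ hθ => (cos_pos_of_mem_Ioo (hsub hθ)).ne'
  have hderiv : ∀ θ ∈ uIcc (-s) s, HasDerivAt (fun θ =>
      a ^ 2 * (θ / 2 + sin θ * cos θ / 2 - cos s * sin θ)
      + 2 * a * b * (sin θ ^ 2 / 2 + cos s * cos θ)
      + b ^ 2 * (θ / 2 - sin θ * cos θ / 2 - cos s * invGudermannian θ + cos s * sin θ))
      ((1 - cos s / cos θ) * (a * cos θ + b * sin θ) ^ 2) θ := by
    intro θ hθ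
    have hcθ := hcos θ hθ
    have hS := hasDerivAt_sin θ
    have hC := hasDerivAt_cos θ
    have hG := hasDerivAt_invGudermannian (hsub hθ)
    have hH := (hasDerivAt_id θ).div_const 2
    have hSC := (hS.mul hC).div_const 2
    refine ((((hH.add hSC).sub (hS.const_mul (cos s))).const_mul (a ^ 2)).add
      ((((hS.pow 2).div_const 2).add (hC.const_mul (cos s))).const_mul (2 * a * b)) |>.add
      ((((hH.sub hSC).sub (hG.const_mul (cos s))).add
        (hS.const_mul (cos s))).const_mul (b ^ 2))).congr_deriv ?_
    field_simp
    ring_nf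
    rw [sin_sq]
    ring
  have hcont : ContinuousOn (fun θ => (1 - cos s / cos θ) * (a * cos θ + b * sin θ) ^ 2)
      (uIcc (-s) s) :=
    (continuousOn_const.sub (continuousOn_const.div continuousOn_cos hcos)).mul (by fun_prop)
  rw [intervalIntegral.integral_eq_sub_of_hasDerivAt hderiv hcont.intervalIntegrable,
    two_mul_sigmaL1]
  simp only [sin_neg, cos_neg, invGudermannian_neg]
  ring

end Gudermannian

section CircularSegment

/-- The open segment of half-opening angle `s` which the chord `re z = cos s` cuts off the unit
disk; every convex set in the half-plane `re z ≤ cos s` misses it. -/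
def circularSegment (s : ℝ) : Set ℂ := {z | ‖z‖ < 1 ∧ cos s < z.re}

lemma measurableSet_circularSegment (s : ℝ) : MeasurableSet (circularSegment s) :=
  (measurableSet_lt measurable_norm measurable_const).inter
    (measurableSet_lt measurable_const Complex.measurable_re)

lemma cos_lt_norm_of_mem_circularSegment {s : ℝ} {z : ℂ} (hz : z ∈ circularSegment s) :
    cos s < ‖z‖ :=
  hz.2.trans_le (Complex.re_le_norm z)

lemma image_circularSegment_subset_closedBall_diff_convexHull {E : Type*} [NormedAddCommGroup E]
    [NormedSpace ℝ E] (e : ℂ ≃ₗᵢ[ℝ] E) {s : ℝ} {S : Set E}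
    (hS : ∀ ξ ∈ S, (e.symm ξ).re ≤ cos s) :
    e '' circularSegment s ⊆ closedBall 0 1 \ convexHull ℝ S := by
  have hhull : convexHull ℝ S ⊆ {ξ | (e.symm ξ).re ≤ cos s} :=
    convexHull_min hS (convex_halfSpace_le
      (Complex.reLm.comp e.symm.toLinearEquiv.toLinearMap).isLinear _)
  rintro _ ⟨z, hz, rfl⟩
  refine ⟨by simpa using hz.1.le, fun hmem => ?_⟩
  have hle := hhull hmem
  simp only [mem_ofPred_eq, LinearIsometryEquiv.symm_apply_apply] at hle
  exact hle.not_gt hz.2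

lemma cos_le_cos_of_mem_Ioo {s θ : ℝ} (hs : s ≤ π) (hθ : θ ∈ Ioo (-s) s) : cos s ≤ cos θ := by
  rw [← cos_abs θ]
  exact cos_le_cos_of_nonneg_of_le_pi (abs_nonneg _) hs (abs_lt.2 hθ).le

lemma setIntegral_regionBetween {α : Type*} [MeasurableSpace α] {μ : Measure α} [SFinite μ]
    {f g h : α → ℝ} {s : Set α} (hf : Measurable f) (hg : Measurable g) (hs : MeasurableSet s)
    (hfg : ∀ x ∈ s, f x ≤ g x)
    (hint : IntegrableOn (fun p => h p.1) (regionBetween f g s) (μ.prod volume)) :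
    ∫ p in regionBetween f g s, h p.1 ∂μ.prod volume = ∫ x in s, (g x - f x) * h x ∂μ := by
  have hmeas := measurableSet_regionBetween hf hg hs
  rw [← integral_indicator hmeas, integral_prod _ ((integrable_indicator_iff hmeas).2 hint),
    ← integral_indicator hs]
  congr 1 with x
  by_cases hx : x ∈ s
  · have hslice : (fun y => (regionBetween f g s).indicator (fun p => h p.1) (x, y)) =
        (Ioo (f x) (g x)).indicator fun _ => h x := by
      ext y
      simp [indicator, regionBetween, hx]
    rw [hslice, integral_indicator measurableSet_Ioo, setIntegral_const, indicator_of_mem hx,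
      smul_eq_mul, volume_real_Ioo_of_le (hfg x hx)]
  · simp [indicator, regionBetween, hx]

lemma polarCoord_symm_mem_circularSegment_iff {s r θ : ℝ} (hs₀ : 0 ≤ s) (hs : s < π / 2)
    (hr : 0 < r) (hθ : θ ∈ Ioo (-π) π) :
    Complex.polarCoord.symm (r, θ) ∈ circularSegment s ↔
      (θ, r) ∈ regionBetween (fun θ => cos s / cos θ) 1 (Ioo (-s) s) := by
  have hcos_s : 0 < cos s := cos_pos_of_mem_Ioo ⟨by linarith, hs⟩
  have hre : (Complex.polarCoord.symm (r, θ)).re = r * cos θ := by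
    simp [Complex.cos_ofReal_re]
  simp only [circularSegment, regionBetween, mem_ofPred_eq, Complex.norm_polarCoord_symm,
    abs_of_pos hr, hre, Pi.one_apply]
  constructor
  · rintro ⟨hr₁, hchord⟩
    have hcos : 0 < cos θ := pos_of_mul_pos_right (hcos_s.trans hchord) hr.le
    have hlt : cos s < cos |θ| := by
      rw [cos_abs]
      exact hchord.trans (mul_lt_of_lt_one_left hcos hr₁)
    have habs : |θ| < s := lt_of_not_ge fun hge => hlt.not_ge
      (cos_le_cos_of_nonneg_of_le_pi hs₀ (abs_lt.2 hθ).le hge)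
    exact ⟨abs_lt.1 habs, (div_lt_iff₀ hcos).2 hchord, hr₁⟩
  · rintro ⟨hθs, hchord, hr₁⟩
    have hcos : 0 < cos θ := hcos_s.trans_le (cos_le_cos_of_mem_Ioo (by linarith) hθs)
    exact ⟨hr₁, (div_lt_iff₀ hcos).1 hchord⟩

lemma setIntegral_circularSegment_arg_div_norm_eq_regionBetween {s : ℝ} (hs₀ : 0 ≤ s)
    (hs : s < π / 2) (h : ℝ → ℝ) :
    ∫ z in circularSegment s, h z.arg / ‖z‖ =
      ∫ p in regionBetween (fun θ => cos s / cos θ) 1 (Ioo (-s) s), h p.1 := by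
  set R := regionBetween (fun θ => cos s / cos θ) 1 (Ioo (-s) s)
  have hRm : MeasurableSet R :=
    measurableSet_regionBetween (by fun_prop) measurable_one measurableSet_Ioo
  have hRtarget : Prod.swap ⁻¹' R ⊆ polarCoord.target := by
    rintro ⟨r, θ⟩ ⟨⟨hθ₁ : -s < θ, hθ₂ : θ < s⟩, hr, -⟩
    have hcos : ∀ x, -s ≤ x → x ≤ s → 0 < cos x := fun x hx₁ hx₂ =>
      cos_pos_of_mem_Ioo ⟨by linarith, by linarith⟩
    exact ⟨(div_pos (hcos s (by linarith) le_rfl) (hcos θ hθ₁.le hθ₂.le)).trans hr,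
      by linarith, by linarith⟩
  calc ∫ z in circularSegment s, h z.arg / ‖z‖
      = ∫ p in polarCoord.target, p.1 •
          (circularSegment s).indicator (fun z => h z.arg / ‖z‖) (Complex.polarCoord.symm p) := by
        rw [Complex.integral_comp_polarCoord_symm,
          integral_indicator (measurableSet_circularSegment s)]
    _ = ∫ p in polarCoord.target, (Prod.swap ⁻¹' R).indicator (fun p => h p.2) p := by
        refine setIntegral_congr_fun polarCoord.open_target.measurableSet ?_
        rintro ⟨r, θ⟩ hp
        obtain ⟨hr : 0 < r, hθ : θ ∈ Ioo (-π) π⟩ := hp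
        have hpolar : Complex.polarCoord (Complex.polarCoord.symm (r, θ)) = (r, θ) :=
          Complex.polarCoord.right_inv ⟨hr, hθ⟩
        rw [Complex.polarCoord_apply, Prod.mk.injEq] at hpolar
        have hiff : _ ↔ (r, θ) ∈ Prod.swap ⁻¹' R :=
          polarCoord_symm_mem_circularSegment_iff hs₀ hs hr hθ
        by_cases hmem : (r, θ) ∈ Prod.swap ⁻¹' R
        · simp only [indicator_of_mem hmem, indicator_of_mem (hiff.2 hmem), hpolar, smul_eq_mul]
          field_simp
        · simp only [indicator_of_notMem hmem, indicator_of_notMem (mt hiff.1 hmem), smul_zero]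
    _ = ∫ p in Prod.swap ⁻¹' R, h p.swap.1 := by
        rw [setIntegral_indicator (measurable_swap hRm), inter_eq_right.2 hRtarget]
        rfl
    _ = ∫ p in R, h p.1 :=
        Measure.measurePreserving_swap.setIntegral_preimage_emb
          MeasurableEquiv.prodComm.measurableEmbedding (fun p => h p.1) R

lemma setIntegral_circularSegment_arg_div_norm {s : ℝ} (hs₀ : 0 ≤ s) (hs : s < π / 2)
    {h : ℝ → ℝ} (hh : Continuous h) :
    ∫ z in circularSegment s, h z.arg / ‖z‖ =
      ∫ θ in (-s)..s, (1 - cos s / cos θ) * h θ := by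
  have hcos : ∀ θ ∈ Ioo (-s) s, 0 < cos θ := fun θ hθ =>
    cos_pos_of_mem_Ioo ⟨by linarith [hθ.1], by linarith [hθ.2]⟩
  have hbox : regionBetween (fun θ => cos s / cos θ) 1 (Ioo (-s) s) ⊆ Icc (-s) s ×ˢ Icc 0 1 :=
    fun ⟨θ, r⟩ ⟨hθ, hr⟩ => ⟨Ioo_subset_Icc_self hθ, (div_nonneg
      (cos_nonneg_of_mem_Icc ⟨by linarith, hs.le⟩) (hcos θ hθ).le).trans hr.1.le, hr.2.le⟩
  have hint : IntegrableOn (fun p : ℝ × ℝ => h p.1)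
      (regionBetween (fun θ => cos s / cos θ) 1 (Ioo (-s) s)) :=
    ((hh.comp continuous_fst).continuousOn.integrableOn_compact
      (isCompact_Icc.prod isCompact_Icc)).mono_set hbox
  rw [setIntegral_circularSegment_arg_div_norm_eq_regionBetween hs₀ hs, Measure.volume_eq_prod,
    setIntegral_regionBetween (by fun_prop) measurable_one measurableSet_Ioo
      (fun θ hθ => (div_le_one (hcos θ hθ)).2 (cos_le_cos_of_mem_Ioo (by linarith) hθ)) hint,
    intervalIntegral.integral_of_le (by linarith), integral_Ioc_eq_integral_Ioo]
  rfl

lemma inner_eq_norm_mul_cos_arg_add_sin_arg (w z : ℂ) :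
    inner ℝ w z = ‖z‖ * (w.re * cos z.arg + w.im * sin z.arg) := by
  rw [mul_add, mul_left_comm, mul_left_comm ‖z‖, Complex.norm_mul_cos_arg,
    Complex.norm_mul_sin_arg, Complex.inner]
  simp only [Complex.mul_re, Complex.conj_re, Complex.conj_im]
  ring

lemma two_mul_sigmaL1_mul_norm_sq_le_setIntegral {s : ℝ} (hs₀ : 0 ≤ s) (hs : s < π / 2) (w : ℂ) :
    2 * sigmaL1 s * ‖w‖ ^ 2 ≤ ∫ z in circularSegment s, inner ℝ w z ^ 2 / ‖z‖ ^ 3 := by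
  have hpolar : ∀ z : ℂ, inner ℝ w z ^ 2 / ‖z‖ ^ 3 =
      (w.re * cos z.arg + w.im * sin z.arg) ^ 2 / ‖z‖ := fun z => by
    rw [inner_eq_norm_mul_cos_arg_add_sin_arg]
    rcases eq_or_ne z 0 with rfl | hz
    · simp
    · field_simp [norm_ne_zero_iff.2 hz]
  calc 2 * sigmaL1 s * ‖w‖ ^ 2
      = w.re ^ 2 * (2 * sigmaL1 s) + w.im ^ 2 * (2 * sigmaL1 s) := by
        rw [Complex.sq_norm, Complex.normSq_apply]; ring
    _ ≤ w.re ^ 2 * (s - sin s * cos s) + w.im ^ 2 * (2 * sigmaL1 s) := by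
        gcongr
        exact two_mul_sigmaL1_le hs₀ hs
    _ = ∫ θ in (-s)..s, (1 - cos s / cos θ) * (w.re * cos θ + w.im * sin θ) ^ 2 :=
        (integral_one_sub_cos_div_cos_mul_sq (by rwa [abs_of_nonneg hs₀]) _ _).symm
    _ = ∫ z in circularSegment s, inner ℝ w z ^ 2 / ‖z‖ ^ 3 := by
        simp only [hpolar]
        exact (setIntegral_circularSegment_arg_div_norm hs₀ hs (by fun_prop)).symm

end CircularSegment

section RadialKernel

lemma quasiMeasurePreserving_norm {E : Type*} [NormedAddCommGroup E] [NormedSpace ℝ E]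
    [FiniteDimensional ℝ E] [Nontrivial E] [MeasurableSpace E] [BorelSpace E] (μ : Measure E)
    [μ.IsAddHaarMeasure] : Measure.QuasiMeasurePreserving (fun x : E => ‖x‖) μ volume := by
  have hradius : Measure.QuasiMeasurePreserving ((↑) : Ioi (0 : ℝ) → ℝ)
      (.volumeIoiPow (Module.finrank ℝ E - 1)) volume :=
    ⟨measurable_subtype_coe, ((withDensity_absolutelyContinuous _ _).map
      measurable_subtype_coe).trans <| by
        rw [map_comap_subtype_coe measurableSet_Ioi]
        exact Measure.restrict_le_self.absolutelyContinuous⟩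
  have hpolar : Measure.QuasiMeasurePreserving (fun x : ({0}ᶜ : Set E) => ‖(x : E)‖)
      (μ.comap (↑)) volume := by
    simpa only [Function.comp_def, homeomorphUnitSphereProd_apply_snd_coe] using
      hradius.comp (Measure.quasiMeasurePreserving_snd.comp
        μ.measurePreserving_homeomorphUnitSphereProd.quasiMeasurePreserving)
  refine ⟨measurable_norm, ?_⟩
  rw [← restrict_compl_singleton (μ := μ) 0,
    ← map_comap_subtype_coe (measurableSet_singleton _).compl,
    Measure.map_map measurable_norm measurable_subtype_coe]
  exact hpolar.absolutelyContinuous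

lemma integrableOn_closedBall_inner_sq_mul_norm {E : Type*} [NormedAddCommGroup E]
    [InnerProductSpace ℝ E] [FiniteDimensional ℝ E] [Nontrivial E] [MeasurableSpace E]
    [BorelSpace E] (μ : Measure E) [μ.IsAddHaarMeasure] {γ : ℝ → ℝ} {R : ℝ}
    (hγ : IntegrableOn (fun ρ => ρ ^ (Module.finrank ℝ E + 1) * γ ρ) (Ioc 0 R)) (v : E) :
    IntegrableOn (fun ξ => inner ℝ v ξ ^ 2 * γ ‖ξ‖) (closedBall 0 R) μ := by
  have hball : (closedBall (0 : E) R) =ᵐ[μ] ball 0 R := by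
    rw [← ball_union_sphere]
    exact union_ae_eq_left_of_ae_eq_empty (ae_eq_empty.2 (Measure.addHaar_sphere μ 0 R))
  have hradial : IntegrableOn (fun ξ : E => ‖ξ‖ ^ 2 * γ ‖ξ‖) (ball 0 R) μ := by
    refine (integrableOn_fun_norm_addHaar (f := fun ρ => ρ ^ 2 * γ ρ) μ).2 ?_
    refine (hγ.mono_set Ioo_subset_Ioc_self).congr_fun (fun ρ _ => ?_) measurableSet_Ioo
    have hdim : Module.finrank ℝ E + 1 = (Module.finrank ℝ E - 1) + 2 := by
      have := Module.finrank_pos (R := ℝ) (M := E)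
      lia
    simp only [smul_eq_mul]
    rw [hdim, pow_add, mul_assoc]
  have hfactor : ∀ ξ : E, inner ℝ v ξ ^ 2 * γ ‖ξ‖ =
      inner ℝ v ξ ^ 2 / ‖ξ‖ ^ 2 * (‖ξ‖ ^ 2 * γ ‖ξ‖) := fun ξ => by
    rcases eq_or_ne ξ 0 with rfl | hξ
    · simp
    · field_simp [norm_ne_zero_iff.2 hξ]
  rw [integrableOn_congr_set_ae hball]
  simp only [hfactor]
  refine hradial.bdd_mul (c := ‖v‖ ^ 2)
    (Measurable.aestronglyMeasurable (by fun_prop)) (.of_forall fun ξ => ?_)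
  rw [norm_of_nonneg (by positivity)]
  refine div_le_of_le_mul₀ (by positivity) (by positivity) ?_
  rw [← mul_pow, ← sq_abs (inner ℝ v ξ)]
  gcongr
  exact abs_real_inner_le_norm v ξ

lemma mul_setIntegral_circularSegment_le {L s : ℝ} {γ : ℝ → ℝ} (hL : 0 ≤ L) (hs : 0 < cos s)
    (hγ : IntegrableOn (fun ρ => ρ ^ 3 * γ ρ) (Ioc 0 1))
    (hlow : ∀ᵐ t ∂volume.restrict (Icc (cos s) 1), L ≤ π * t ^ 3 * γ t) (w : ℂ) :
    L / π * ∫ z in circularSegment s, inner ℝ w z ^ 2 / ‖z‖ ^ 3 ≤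
      ∫ z in circularSegment s, inner ℝ w z ^ 2 * γ ‖z‖ := by
  have hint : IntegrableOn (fun z => inner ℝ w z ^ 2 * γ ‖z‖) (circularSegment s) :=
    (integrableOn_closedBall_inner_sq_mul_norm volume
      (by rwa [Complex.finrank_real_complex]) w).mono_set fun z hz => by simpa using hz.1.le
  rw [← integral_const_mul]
  refine integral_mono_of_nonneg (.of_forall fun z => by positivity) hint ?_
  refine (ae_restrict_iff' (measurableSet_circularSegment s)).2 ?_
  filter_upwards [(quasiMeasurePreserving_norm (E := ℂ) volume).ae
    ((ae_restrict_iff' measurableSet_Icc).1 hlow)] with z hz hzs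
  have hcos := cos_lt_norm_of_mem_circularSegment hzs
  have hnorm : 0 < ‖z‖ := hs.trans hcos
  have hkernel : L / π / ‖z‖ ^ 3 ≤ γ ‖z‖ := by
    rw [div_div, div_le_iff₀ (by positivity), mul_comm]
    exact hz ⟨hcos.le, hzs.1.le⟩
  calc L / π * (inner ℝ w z ^ 2 / ‖z‖ ^ 3) = inner ℝ w z ^ 2 * (L / π / ‖z‖ ^ 3) := by ring
    _ ≤ inner ℝ w z ^ 2 * γ ‖z‖ := by gcongr

lemma setIntegral_le_setIntegral_closedBall_diff_convexHull {E : Type*} [NormedAddCommGroup E]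
    [InnerProductSpace ℝ E] [FiniteDimensional ℝ E] [Nontrivial E] [MeasurableSpace E]
    [BorelSpace E] {γ : ℝ → ℝ} {R : ℝ} (hγ₀ : ∀ ρ, 0 < ρ → ρ ≤ R → 0 ≤ γ ρ)
    (hγ : IntegrableOn (fun ρ => ρ ^ (Module.finrank ℝ E + 1) * γ ρ) (Ioc 0 R))
    {S T : Set E} (hS : S.Finite) (hT : T ⊆ closedBall 0 R \ convexHull ℝ S) (v : E) :
    ∫ ξ in T, inner ℝ v ξ ^ 2 * γ ‖ξ‖ ≤
      ∫ ξ in closedBall 0 R \ convexHull ℝ S, inner ℝ v ξ ^ 2 * γ ‖ξ‖ := by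
  have hmeas : MeasurableSet (closedBall 0 R \ convexHull ℝ S) :=
    measurableSet_closedBall.diff (hS.isCompact_convexHull ℝ).isClosed.measurableSet
  refine setIntegral_mono_set
    ((integrableOn_closedBall_inner_sq_mul_norm volume hγ v).mono_set sdiff_subset)
    (ae_restrict_of_forall_mem hmeas fun ξ hξ => ?_) hT.eventuallyLE
  rcases eq_or_ne ξ 0 with rfl | hξ₀
  · simp
  · exact mul_nonneg (sq_nonneg _) (hγ₀ _ (norm_pos_iff.2 hξ₀) (mem_closedBall_zero_iff.1 hξ.1))

end RadialKernel

theorem stmt13_general {E : Type*} [NormedAddCommGroup E] [InnerProductSpace ℝ E]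
    [FiniteDimensional ℝ E] [MeasurableSpace E] [BorelSpace E] (hE : Module.finrank ℝ E = 2)
    {N : ℕ} (hN : 3 ≤ N) {L₁ : ℝ} (hL₁ : 0 ≤ L₁)
    {γ : ℝ → ℝ} (hγ0 : ∀ ρ, 0 < ρ → ρ ≤ 1 → 0 ≤ γ ρ)
    (hint : IntegrableOn (fun ρ => ρ ^ 3 * γ ρ) (Ioc 0 1))
    (hlow : ∀ᵐ t ∂volume.restrict (Icc (cos (π / N)) 1), L₁ ≤ π * t ^ 3 * γ t)
    {S : Set E} (hSfin : S.Finite) (hScard : S.ncard ≤ N) (hSball : ∀ ξ ∈ S, ‖ξ‖ ≤ 1) (v : E) :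
    2 * L₁ / π * sigmaL1 (π / N) * ‖v‖ ^ 2 ≤
      ∫ ξ in closedBall 0 1 \ convexHull ℝ S, inner ℝ v ξ ^ 2 * γ ‖ξ‖ := by
  have : Nontrivial E := Module.nontrivial_of_finrank_eq_succ hE
  have hs₀ : 0 ≤ π / N := by positivity
  have hs : π / N < π / 2 := by gcongr; exact_mod_cast hN
  have hcos : 0 < cos (π / N) := cos_pos_of_mem_Ioo ⟨by linarith [pi_pos], hs⟩
  obtain ⟨e, he⟩ := exists_isometry_forall_re_symm_le hE hSfin hScard
  have hS : ∀ ξ ∈ S, (e.symm ξ).re ≤ cos (π / N) := fun ξ hξ =>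
    (he ξ hξ).trans (mul_le_of_le_one_left hcos.le (hSball ξ hξ))
  calc 2 * L₁ / π * sigmaL1 (π / N) * ‖v‖ ^ 2
      = L₁ / π * (2 * sigmaL1 (π / N) * ‖e.symm v‖ ^ 2) := by
        rw [LinearIsometryEquiv.norm_map]; ring
    _ ≤ L₁ / π * ∫ z in circularSegment (π / N), inner ℝ (e.symm v) z ^ 2 / ‖z‖ ^ 3 := by
        gcongr
        exact two_mul_sigmaL1_mul_norm_sq_le_setIntegral hs₀ hs _
    _ ≤ ∫ z in circularSegment (π / N), inner ℝ (e.symm v) z ^ 2 * γ ‖z‖ :=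
        mul_setIntegral_circularSegment_le hL₁ hcos hint hlow _
    _ = ∫ ξ in e '' circularSegment (π / N), inner ℝ v ξ ^ 2 * γ ‖ξ‖ := by
        rw [e.measurePreserving.setIntegral_image_emb e.toHomeomorph.measurableEmbedding]
        simp only [e.norm_map, ← e.inner_map_map (e.symm v), e.apply_symm_apply]
    _ ≤ ∫ ξ in closedBall 0 1 \ convexHull ℝ S, inner ℝ v ξ ^ 2 * γ ‖ξ‖ :=
        setIntegral_le_setIntegral_closedBall_diff_convexHull hγ0 (by rwa [hE]) hSfin
          (image_circularSegment_subset_closedBall_diff_convexHull e hS) v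

/-- quantitative non-convergence for polygonal neighborhoods,
first-order kernel case. -/
theorem stmt13 (N : ℕ) (hN : 3 ≤ N) (L₁ : ℝ) (hL₁ : 0 < L₁)
    (γ : ℝ → ℝ) (hγm : Measurable γ) (hγ0 : ∀ ρ, 0 < ρ → ρ ≤ 1 → 0 ≤ γ ρ)
    (hint : IntegrableOn (fun ρ => ρ ^ 3 * γ ρ) (Ioc (0 : ℝ) 1))
    (hlow : ∀ᵐ t ∂(volume.restrict (Icc (Real.cos (π / N)) 1)), L₁ ≤ π * t ^ 3 * γ t)
    (S : Set (EuclideanSpace ℝ (Fin 2))) (hSfin : S.Finite) (hScard : S.ncard ≤ N)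
    (hScirc : ∀ ξ ∈ S, ‖ξ‖ = 1) (i : Fin 2) :
    (2 * L₁ / π) * sigmaL1 (π / N) ≤
      ∫ ξ in closedBall (0 : EuclideanSpace ℝ (Fin 2)) 1 \ convexHull ℝ S,
        (ξ i) ^ 2 * γ ‖ξ‖ := by
  simpa [EuclideanSpace.inner_single_left] using
    stmt13_general finrank_euclideanSpace_fin hN hL₁.le hγ0 hint hlow hSfin hScard
    (fun ξ hξ => (hScirc ξ hξ).le) (EuclideanSpace.single i 1)
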